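/- Let a : T → ℂ have absolutely summable Fourier coefficients, be nonvanishing and even, and suppose a(e^{iθ}) = a₊(e^{−iθ}) · G · a₊(e^{iθ}) where a₊(z) = Σ_{k≥0} γ_k z^k with Σ|γ_k| < ∞, a₊(0) = 1, a₊ nonvanishing on the closed unit disk, and G ∈ ℂ. Set ψ(e^{iθ}) = a₊(e^{−iθ})/a₊(e^{iθ}). Then any bounded operator I + H(ψ) on ℓ²(ℕ) (with entries δ_{jk} + ψ_{j+k+1}) is invertible, and for every n ≥ 1: det( (a_{j−k} + a_{j+k+1})_{j,k=0}^{n−1} ) = G^n · det[P_n (I + H(ψ))^{−1} P_n]. -/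

import Mathlib

open Filter MeasureTheory
open scoped InnerProductSpace

noncomputable section

/-- ℓ²(ℕ) over ℂ. -/
abbrev l2 : Type := lp (fun _ : ℕ => ℂ) 2

/-- The `k`-th Fourier coefficient of a function on the unit circle, given as a
`2π`-periodic function of the angle: `a_k = (1/(2π)) ∫_0^{2π} f(θ) e^{-ikθ} dθ`. -/
def fc (f : ℝ → ℂ) (k : ℤ) : ℂ :=
  ((1 / (2 * Real.pi) : ℝ) : ℂ) *
    ∫ θ in (0:ℝ)..(2 * Real.pi), f θ * Complex.exp (-(Complex.I * k * θ))

/-- The standard orthonormal basis vector `e_j` of ℓ²(ℕ). -/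
def ee (j : ℕ) : l2 := lp.single 2 j 1

/-- Matrix entry `⟨e_j, A e_k⟩` of an operator on ℓ²(ℕ). -/
def ent (A : l2 →L[ℂ] l2) (j k : ℕ) : ℂ := ⟪ee j, A (ee k)⟫_ℂ

/-!
Write `f` for the boundary values of `a₊`, `g = 1/f`, `f̃(θ) = f(-θ)` and `M(h) = T(h) + H(h)`.
The product formulas for Toeplitz and Hankel operators give `M(hk) = M(h) M(k)` for even `k`, so
that `M(g̃g)` is inverse to `M(f̃f)`. As `f` and `g` extend analytically to the disk,
`H(f̃) = H(g̃) = 0`, and the same formulas yield `I + H(f̃g) = T(f̃) M(g̃g) T(f)`, where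
`T(f)⁻¹ = T(g)` and `T(f̃)⁻¹ = T(g̃)`. Inverting, `M(f̃f) = T(f) (I + H(f̃g))⁻¹ T(f̃)`. Here `T(f)`
is lower and `T(f̃)` upper triangular with constant diagonal `a₊(0)`, so the `n × n` corner of the
product is the product of the corners.
-/

open AddCircle Metric
open scoped Real

section SequenceOperators

lemma inner_ee_left (j : ℕ) (x : l2) : ⟪ee j, x⟫_ℂ = x j := by
  simp [ee, lp.inner_single_left]

lemma hasSum_ee (x : l2) : HasSum (fun i => x i • ee i) x := by
  refine (lp.hasSum_single (E := fun _ : ℕ => ℂ) (by simp) x).congr_fun fun i => ?_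
  rw [ee, ← lp.single_smul, smul_eq_mul, mul_one]

lemma eq_of_ent_eq {A B : l2 →L[ℂ] l2} (h : ∀ j k, ent A j k = ent B j k) : A = B := by
  have h_ee : ∀ k, A (ee k) = B (ee k) := fun k => lp.ext <| funext fun j => by
    simpa only [ent, inner_ee_left] using h j k
  ext1 x
  have hA := (hasSum_ee x).mapL A
  simp only [map_smul, h_ee] at hA
  exact hA.unique (by simpa only [map_smul] using (hasSum_ee x).mapL B)

lemma ent_one (j k : ℕ) : ent 1 j k = if j = k then 1 else 0 := by
  rw [ent, inner_ee_left, one_apply_eq_self, ee, lp.single_apply, Pi.single_apply]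

lemma ent_zero (j k : ℕ) : ent 0 j k = 0 := by
  simp [ent]

lemma ent_add (A B : l2 →L[ℂ] l2) (j k : ℕ) : ent (A + B) j k = ent A j k + ent B j k := by
  simp [ent]

lemma hasSum_ent_mul (A B : l2 →L[ℂ] l2) (j k : ℕ) :
    HasSum (fun p => ent A j p * ent B p k) (ent (A * B) j k) := by
  refine ((hasSum_ee (B (ee k))).mapL (innerSL ℂ (ee j) ∘L A)).congr_fun fun p => ?_
  simp [ent, inner_ee_left, mul_comm]

/-- The finite section `P_n A P_n` of an operator on ℓ²(ℕ), as an `n × n` matrix. -/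
def finiteSection (A : l2 →L[ℂ] l2) (n : ℕ) : Matrix (Fin n) (Fin n) ℂ :=
  Matrix.of fun j k => ent A j k

lemma finiteSection_mul {A B : l2 →L[ℂ] l2} {n : ℕ}
    (h : ∀ j < n, ∀ k < n, ∀ p ≥ n, ent A j p * ent B p k = 0) :
    finiteSection (A * B) n = finiteSection A n * finiteSection B n := by
  ext j k
  have h_finite : HasSum (fun p => ent A j p * ent B p k)
      (∑ p ∈ Finset.range n, ent A j p * ent B p k) :=
    hasSum_sum_of_ne_finset_zero fun p hp => h j j.2 k k.2 p (by simpa using hp)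
  rw [Matrix.mul_apply, finiteSection, Matrix.of_apply, (hasSum_ent_mul A B j k).unique h_finite,
    ← Fin.sum_univ_eq_sum_range (fun p => ent A j p * ent B p k)]
  rfl

lemma finiteSection_mul_of_isLowerTriangular {L : l2 →L[ℂ] l2}
    (hL : (Matrix.of (ent L)).IsLowerTriangular) (A : l2 →L[ℂ] l2) (n : ℕ) :
    finiteSection (L * A) n = finiteSection L n * finiteSection A n :=
  finiteSection_mul fun j hj _ _ _ hp => mul_eq_zero_of_left (hL (i := j) (hj.trans_le hp)) _

lemma finiteSection_mul_of_isUpperTriangular {U : l2 →L[ℂ] l2}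
    (hU : (Matrix.of (ent U)).IsUpperTriangular) (A : l2 →L[ℂ] l2) (n : ℕ) :
    finiteSection (A * U) n = finiteSection A n * finiteSection U n :=
  finiteSection_mul fun _ _ _ hk p hp => mul_eq_zero_of_right _ (hU (i := p) (hk.trans_le hp))

lemma det_finiteSection_of_isLowerTriangular {L : l2 →L[ℂ] l2}
    (hL : (Matrix.of (ent L)).IsLowerTriangular) (n : ℕ) :
    (finiteSection L n).det = ∏ j : Fin n, ent L j j :=
  Matrix.det_of_isLowerTriangular _ fun _ _ h => hL h

lemma det_finiteSection_of_isUpperTriangular {U : l2 →L[ℂ] l2}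
    (hU : (Matrix.of (ent U)).IsUpperTriangular) (n : ℕ) :
    (finiteSection U n).det = ∏ j : Fin n, ent U j j :=
  Matrix.det_of_isUpperTriangular fun _ _ h => hU h

end SequenceOperators

section Multiplication

variable {X : Type*} [TopologicalSpace X] [CompactSpace X] [MeasurableSpace X] [BorelSpace X]
  (μ : Measure X) [IsFiniteMeasure μ]

/-- The operator of multiplication by a continuous function on `L²(μ)`. -/
def mulOp (f : C(X, ℂ)) : Lp ℂ 2 μ →L[ℂ] Lp ℂ 2 μ :=
  (ContinuousLinearMap.mul ℂ ℂ).holderL μ ⊤ 2 2 (ContinuousMap.toLp ⊤ μ ℂ f)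

lemma coeFn_mulOp (f : C(X, ℂ)) (u : Lp ℂ 2 μ) : mulOp μ f u =ᵐ[μ] fun x => f x * u x := by
  filter_upwards [(ContinuousLinearMap.mul ℂ ℂ).coeFn_holder (r := 2)
    (ContinuousMap.toLp ⊤ μ ℂ f) u, ContinuousMap.coeFn_toLp (p := ⊤) (𝕜 := ℂ) μ f] with x hx hf
  rw [mulOp, ContinuousLinearMap.holderL_apply_apply, hx, hf, ContinuousLinearMap.mul_apply']

lemma mulOp_mul (f g : C(X, ℂ)) : mulOp μ (f * g) = mulOp μ f ∘L mulOp μ g := by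
  ext1 u
  refine Lp.ext ?_
  filter_upwards [coeFn_mulOp μ (f * g) u, coeFn_mulOp μ f (mulOp μ g u), coeFn_mulOp μ g u]
    with x h_fg h_f h_g
  rw [h_fg, ContinuousLinearMap.comp_apply, h_f, h_g, ContinuousMap.mul_apply, mul_assoc]

end Multiplication

section ToeplitzHankel

variable {T : ℝ}

/-- The reflection `f ↦ f̃` of symbols, where `f̃(x) = f(-x)`. -/
def reflect : C(AddCircle T, ℂ) →ₐ[ℂ] C(AddCircle T, ℂ) :=
  ContinuousMap.compRightAlgHom ℂ ℂ ⟨Neg.neg, continuous_neg⟩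

lemma reflect_apply (f : C(AddCircle T, ℂ)) (x : AddCircle T) : reflect f x = f (-x) := rfl

lemma reflect_reflect (f : C(AddCircle T, ℂ)) : reflect (reflect f) = f := by
  ext x
  rw [reflect_apply, reflect_apply, neg_neg]

lemma reflect_reflect_mul_self (f : C(AddCircle T, ℂ)) :
    reflect (reflect f * f) = reflect f * f := by
  rw [map_mul, reflect_reflect, mul_comm]

variable [Fact (0 < T)]

lemma inner_mulOp_fourierLp (f : C(AddCircle T, ℂ)) (m n : ℤ) :
    ⟪fourierLp 2 m, mulOp haarAddCircle f (fourierLp 2 n)⟫_ℂ = fourierCoeff f (m - n) := by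
  rw [L2.inner_def, fourierCoeff]
  refine integral_congr_ae ?_
  filter_upwards [coeFn_fourierLp 2 m, coeFn_fourierLp 2 n,
    coeFn_mulOp haarAddCircle f (fourierLp 2 n)] with x h_m h_n h_f
  rw [h_m, h_f, h_n, RCLike.inner_apply, neg_sub, sub_eq_add_neg, fourier_add, fourier_neg,
    smul_eq_mul]
  ring

/-- The isometric embedding of ℓ²(ℕ) into `L²(ℝ / Tℤ)` that sends `e_n` to the Fourier monomial of
frequency `d n`. -/
def fourierEmb (T : ℝ) [Fact (0 < T)] (d : ℕ ↪ ℤ) :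
    l2 →L[ℂ] Lp ℂ 2 (haarAddCircle (T := T)) :=
  (orthonormal_fourier.comp d d.injective).orthogonalFamily.linearIsometry.toContinuousLinearMap

lemma fourierEmb_ee (d : ℕ ↪ ℤ) (n : ℕ) : fourierEmb T d (ee n) = fourierLp 2 (d n) := by
  simp [fourierEmb, ee, OrthogonalFamily.linearIsometry_apply_single]

lemma hasSum_fourierEmb_adjoint (d : ℕ ↪ ℤ) (u : Lp ℂ 2 (haarAddCircle (T := T))) :
    HasSum (fun n => ⟪fourierLp 2 (d n), u⟫_ℂ • fourierLp 2 (d n))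
      (fourierEmb T d ((fourierEmb T d).adjoint u)) := by
  refine ((hasSum_ee _).mapL (fourierEmb T d)).congr_fun fun n => ?_
  rw [map_smul, ← inner_ee_left, ContinuousLinearMap.adjoint_inner_right, fourierEmb_ee]

/-- The frequencies `0, 1, 2, …` of the Hardy space. -/
def hardyFreq : ℕ ↪ ℤ := Nat.castEmbedding

lemma hardyFreq_apply (n : ℕ) : hardyFreq n = n := rfl

/-- The frequencies `-1, -2, -3, …` of the orthogonal complement of the Hardy space. -/
def coHardyFreq : ℕ ↪ ℤ := ⟨Int.negSucc, fun _ _ => Int.negSucc.inj⟩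

lemma coHardyFreq_apply (n : ℕ) : coHardyFreq n = -(n + 1) := Int.negSucc_eq n

lemma fourierEmb_comp_adjoint_add :
    fourierEmb T hardyFreq ∘L (fourierEmb T hardyFreq).adjoint
      + fourierEmb T coHardyFreq ∘L (fourierEmb T coHardyFreq).adjoint = 1 := by
  ext1 u
  have h_expansion := fourierBasis.hasSum_repr u
  simp only [HilbertBasis.repr_apply_apply, coe_fourierBasis] at h_expansion
  exact (HasSum.int_rec (hasSum_fourierEmb_adjoint hardyFreq u)
    (hasSum_fourierEmb_adjoint coHardyFreq u)).unique
      (h_expansion.congr_fun fun n => by cases n <;> rfl)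

/-- The block of the Laurent matrix `(f_{m-n})_{m,n ∈ ℤ}` with rows `d` and columns `e`, as an
operator on ℓ²(ℕ). -/
def laurentBlock (d e : ℕ ↪ ℤ) (f : C(AddCircle T, ℂ)) : l2 →L[ℂ] l2 :=
  (fourierEmb T d).adjoint ∘L mulOp haarAddCircle f ∘L fourierEmb T e

lemma ent_laurentBlock (d e : ℕ ↪ ℤ) (f : C(AddCircle T, ℂ)) (j k : ℕ) :
    ent (laurentBlock d e f) j k = fourierCoeff f (d j - e k) := by
  rw [ent, laurentBlock, ContinuousLinearMap.comp_apply, ContinuousLinearMap.comp_apply,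
    ContinuousLinearMap.adjoint_inner_right, fourierEmb_ee, fourierEmb_ee, inner_mulOp_fourierLp]

lemma laurentBlock_mul (d e : ℕ ↪ ℤ) (f g : C(AddCircle T, ℂ)) :
    laurentBlock d e (f * g)
      = laurentBlock d hardyFreq f * laurentBlock hardyFreq e g
        + laurentBlock d coHardyFreq f * laurentBlock coHardyFreq e g := by
  ext1 x
  have h := DFunLike.congr_fun fourierEmb_comp_adjoint_add
    (mulOp haarAddCircle g (fourierEmb T e x))
  simp only [add_apply, ContinuousLinearMap.comp_apply, one_apply_eq_self] at h
  simp only [laurentBlock, mulOp_mul, add_apply, mul_apply_eq_comp, ContinuousLinearMap.comp_apply]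
  rw [← map_add, ← map_add, h]

/-- The Toeplitz operator `(f_{j-k})_{j,k ≥ 0}` with a continuous symbol. -/
def toeplitzOp (f : C(AddCircle T, ℂ)) : l2 →L[ℂ] l2 := laurentBlock hardyFreq hardyFreq f

/-- The Hankel operator `(f_{j+k+1})_{j,k ≥ 0}` with a continuous symbol. -/
def hankelOp (f : C(AddCircle T, ℂ)) : l2 →L[ℂ] l2 := laurentBlock hardyFreq coHardyFreq f

lemma fourierCoeff_reflect (f : C(AddCircle T, ℂ)) (n : ℤ) :
    fourierCoeff (reflect f) n = fourierCoeff f (-n) := by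
  rw [fourierCoeff, fourierCoeff, ← integral_neg_eq_self]
  simp [reflect_apply, fourier_apply]

lemma ent_toeplitzOp (f : C(AddCircle T, ℂ)) (j k : ℕ) :
    ent (toeplitzOp f) j k = fourierCoeff f (j - k) :=
  ent_laurentBlock ..

lemma ent_hankelOp (f : C(AddCircle T, ℂ)) (j k : ℕ) :
    ent (hankelOp f) j k = fourierCoeff f (j + k + 1) := by
  rw [hankelOp, ent_laurentBlock, hardyFreq_apply, coHardyFreq_apply]
  ring_nf

lemma laurentBlock_coHardy_coHardy (f : C(AddCircle T, ℂ)) :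
    laurentBlock coHardyFreq coHardyFreq f = toeplitzOp (reflect f) := by
  refine eq_of_ent_eq fun j k => ?_
  rw [ent_laurentBlock, ent_toeplitzOp, fourierCoeff_reflect, coHardyFreq_apply, coHardyFreq_apply]
  ring_nf

lemma laurentBlock_coHardy_hardy (f : C(AddCircle T, ℂ)) :
    laurentBlock coHardyFreq hardyFreq f = hankelOp (reflect f) := by
  refine eq_of_ent_eq fun j k => ?_
  rw [ent_laurentBlock, ent_hankelOp, fourierCoeff_reflect, coHardyFreq_apply, hardyFreq_apply]
  ring_nf

lemma toeplitzOp_mul (f g : C(AddCircle T, ℂ)) :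
    toeplitzOp (f * g) = toeplitzOp f * toeplitzOp g + hankelOp f * hankelOp (reflect g) := by
  rw [← laurentBlock_coHardy_hardy]
  exact laurentBlock_mul hardyFreq hardyFreq f g

lemma hankelOp_mul (f g : C(AddCircle T, ℂ)) :
    hankelOp (f * g) = toeplitzOp f * hankelOp g + hankelOp f * toeplitzOp (reflect g) := by
  rw [← laurentBlock_coHardy_coHardy]
  exact laurentBlock_mul hardyFreq coHardyFreq f g

lemma fourierCoeff_one (n : ℤ) :
    fourierCoeff (1 : C(AddCircle T, ℂ)) n = if n = 0 then 1 else 0 := by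
  have h : (1 : C(AddCircle T, ℂ)) = fourier 0 := by
    ext x
    simp
  rw [h, fourierCoeff_fourier, Pi.single_apply]

lemma toeplitzOp_one : toeplitzOp (1 : C(AddCircle T, ℂ)) = 1 := by
  refine eq_of_ent_eq fun j k => ?_
  simp only [ent_toeplitzOp, fourierCoeff_one, ent_one, sub_eq_zero, Nat.cast_inj]

lemma hankelOp_one : hankelOp (1 : C(AddCircle T, ℂ)) = 0 := by
  refine eq_of_ent_eq fun j k => ?_
  rw [ent_hankelOp, fourierCoeff_one, if_neg (by omega), ent_zero]

/-- The operator `M(f) = T(f) + H(f)`, whose finite sections are the Toeplitz plus Hankel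
matrices. -/
def toeplitzAddHankelOp (f : C(AddCircle T, ℂ)) : l2 →L[ℂ] l2 := toeplitzOp f + hankelOp f

lemma ent_toeplitzAddHankelOp (f : C(AddCircle T, ℂ)) (j k : ℕ) :
    ent (toeplitzAddHankelOp f) j k = fourierCoeff f (j - k) + fourierCoeff f (j + k + 1) := by
  rw [toeplitzAddHankelOp, ent_add, ent_toeplitzOp, ent_hankelOp]

lemma toeplitzAddHankelOp_mul_of_even (f : C(AddCircle T, ℂ)) {g : C(AddCircle T, ℂ)}
    (hg : reflect g = g) :
    toeplitzAddHankelOp (f * g) = toeplitzAddHankelOp f * toeplitzAddHankelOp g := by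
  simp only [toeplitzAddHankelOp, toeplitzOp_mul, hankelOp_mul, hg]
  noncomm_ring

lemma toeplitzAddHankelOp_mul_eq_one {f g : C(AddCircle T, ℂ)} (hg : reflect g = g)
    (hfg : f * g = 1) : toeplitzAddHankelOp f * toeplitzAddHankelOp g = 1 := by
  rw [← toeplitzAddHankelOp_mul_of_even f hg, hfg, toeplitzAddHankelOp, toeplitzOp_one,
    hankelOp_one, add_zero]

end ToeplitzHankel

section WienerHopf

variable {T : ℝ} [Fact (0 < T)] {f g : C(AddCircle T, ℂ)}

/-- The symbols of plus type, whose Fourier series involves nonnegative frequencies only. -/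
def IsPlusSymbol (f : C(AddCircle T, ℂ)) : Prop := ∀ n < 0, fourierCoeff f n = 0

namespace IsPlusSymbol

lemma hankelOp_reflect (hf : IsPlusSymbol f) : hankelOp (reflect f) = 0 := by
  refine eq_of_ent_eq fun j k => ?_
  rw [ent_hankelOp, fourierCoeff_reflect, hf _ (by omega), ent_zero]

lemma isLowerTriangular_toeplitzOp (hf : IsPlusSymbol f) :
    (Matrix.of (ent (toeplitzOp f))).IsLowerTriangular := fun j k (hjk : j < k) => by
  rw [Matrix.of_apply, ent_toeplitzOp, hf _ (by omega)]

lemma isUpperTriangular_toeplitzOp_reflect (hf : IsPlusSymbol f) :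
    (Matrix.of (ent (toeplitzOp (reflect f)))).IsUpperTriangular := fun j k (hkj : k < j) => by
  rw [Matrix.of_apply, ent_toeplitzOp, fourierCoeff_reflect, hf _ (by omega)]

lemma toeplitzOp_mul (f : C(AddCircle T, ℂ)) (hg : IsPlusSymbol g) :
    toeplitzOp (f * g) = toeplitzOp f * toeplitzOp g := by
  rw [_root_.toeplitzOp_mul, hg.hankelOp_reflect, mul_zero, add_zero]

lemma toeplitzOp_reflect_mul (hf : IsPlusSymbol f) (g : C(AddCircle T, ℂ)) :
    toeplitzOp (reflect f * g) = toeplitzOp (reflect f) * toeplitzOp g := by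
  rw [_root_.toeplitzOp_mul, hf.hankelOp_reflect, zero_mul, add_zero]

lemma hankelOp_reflect_mul (hf : IsPlusSymbol f) (g : C(AddCircle T, ℂ)) :
    hankelOp (reflect f * g) = toeplitzOp (reflect f) * hankelOp g := by
  rw [hankelOp_mul, hf.hankelOp_reflect, zero_mul, add_zero]

lemma hankelOp_reflect_mul_eq_hankelOp_mul_toeplitzOp (hf : IsPlusSymbol f)
    (g : C(AddCircle T, ℂ)) : hankelOp (reflect f * g) = hankelOp g * toeplitzOp f := by
  rw [mul_comm, hankelOp_mul, hf.hankelOp_reflect, mul_zero, zero_add, reflect_reflect]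

lemma toeplitzAddHankelOp_reflect_mul (hf : IsPlusSymbol f) (g : C(AddCircle T, ℂ)) :
    toeplitzAddHankelOp (reflect f * g) = toeplitzOp (reflect f) * toeplitzAddHankelOp g := by
  rw [toeplitzAddHankelOp, toeplitzAddHankelOp, hf.toeplitzOp_reflect_mul,
    hf.hankelOp_reflect_mul, mul_add]

lemma toeplitzOp_mul_eq_one (hg : IsPlusSymbol g) (hfg : f * g = 1) :
    toeplitzOp f * toeplitzOp g = 1 := by
  rw [← toeplitzOp_mul f hg, hfg, toeplitzOp_one]

lemma toeplitzOp_reflect_mul_eq_one (hf : IsPlusSymbol f) (hfg : f * g = 1) :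
    toeplitzOp (reflect f) * toeplitzOp (reflect g) = 1 := by
  rw [← hf.toeplitzOp_reflect_mul, ← map_mul, hfg, map_one, toeplitzOp_one]

lemma one_add_hankelOp_reflect_mul (hf : IsPlusSymbol f) (hfg : f * g = 1) :
    1 + hankelOp (reflect f * g)
      = toeplitzOp (reflect f) * toeplitzAddHankelOp (reflect g * g) * toeplitzOp f :=
  calc 1 + hankelOp (reflect f * g)
      = toeplitzAddHankelOp g * toeplitzOp f := by
        rw [toeplitzAddHankelOp, add_mul, hf.toeplitzOp_mul_eq_one ((mul_comm g f).trans hfg),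
          hf.hankelOp_reflect_mul_eq_hankelOp_mul_toeplitzOp]
    _ = toeplitzAddHankelOp (reflect f * (reflect g * g)) * toeplitzOp f := by
        rw [← mul_assoc, ← map_mul, hfg, map_one, one_mul]
    _ = toeplitzOp (reflect f) * toeplitzAddHankelOp (reflect g * g) * toeplitzOp f := by
        rw [hf.toeplitzAddHankelOp_reflect_mul]

end IsPlusSymbol

lemma toeplitzAddHankelOp_reflect_mul_self_mul_eq_one (hfg : f * g = 1) :
    toeplitzAddHankelOp (reflect f * f) * toeplitzAddHankelOp (reflect g * g) = 1 :=
  toeplitzAddHankelOp_mul_eq_one (reflect_reflect_mul_self g) <| by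
    rw [mul_mul_mul_comm, ← map_mul, hfg, map_one, one_mul]

/-- The inverse of `I + H(f̃g)` for symbols `f`, `g = 1/f` of plus type, obtained by inverting the
factors of `I + H(f̃g) = T(f̃) M(g̃g) T(f)`. -/
def oneAddHankelInv (f g : C(AddCircle T, ℂ)) : l2 →L[ℂ] l2 :=
  toeplitzOp g * toeplitzAddHankelOp (reflect f * f) * toeplitzOp (reflect g)

lemma one_add_hankelOp_mul_oneAddHankelInv (hf : IsPlusSymbol f) (hg : IsPlusSymbol g)
    (hfg : f * g = 1) : (1 + hankelOp (reflect f * g)) * oneAddHankelInv f g = 1 := by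
  rw [hf.one_add_hankelOp_reflect_mul hfg, oneAddHankelInv]
  calc _ = toeplitzOp (reflect f) * (toeplitzAddHankelOp (reflect g * g)
          * ((toeplitzOp f * toeplitzOp g) * toeplitzAddHankelOp (reflect f * f)))
          * toeplitzOp (reflect g) := by noncomm_ring
    _ = 1 := by
      rw [hg.toeplitzOp_mul_eq_one hfg, one_mul, toeplitzAddHankelOp_reflect_mul_self_mul_eq_one
        ((mul_comm g f).trans hfg), mul_one, hf.toeplitzOp_reflect_mul_eq_one hfg]

lemma oneAddHankelInv_mul_one_add_hankelOp (hf : IsPlusSymbol f) (hg : IsPlusSymbol g)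
    (hfg : f * g = 1) : oneAddHankelInv f g * (1 + hankelOp (reflect f * g)) = 1 := by
  have hgf : g * f = 1 := (mul_comm g f).trans hfg
  rw [hf.one_add_hankelOp_reflect_mul hfg, oneAddHankelInv]
  calc _ = toeplitzOp g * (toeplitzAddHankelOp (reflect f * f)
          * ((toeplitzOp (reflect g) * toeplitzOp (reflect f))
            * toeplitzAddHankelOp (reflect g * g))) * toeplitzOp f := by noncomm_ring
    _ = 1 := by
      rw [hg.toeplitzOp_reflect_mul_eq_one hgf, one_mul,
        toeplitzAddHankelOp_reflect_mul_self_mul_eq_one hfg, mul_one,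
        hf.toeplitzOp_mul_eq_one hgf]

lemma toeplitzOp_mul_oneAddHankelInv_mul_toeplitzOp_reflect (hg : IsPlusSymbol g)
    (hfg : f * g = 1) :
    toeplitzOp f * oneAddHankelInv f g * toeplitzOp (reflect f)
      = toeplitzAddHankelOp (reflect f * f) := by
  calc _ = (toeplitzOp f * toeplitzOp g) * toeplitzAddHankelOp (reflect f * f)
          * (toeplitzOp (reflect g) * toeplitzOp (reflect f)) := by
        rw [oneAddHankelInv]
        noncomm_ring
    _ = toeplitzAddHankelOp (reflect f * f) := by
      rw [hg.toeplitzOp_mul_eq_one hfg, one_mul,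
        hg.toeplitzOp_reflect_mul_eq_one ((mul_comm g f).trans hfg), mul_one]

theorem det_finiteSection_toeplitzAddHankelOp (hf : IsPlusSymbol f) (hg : IsPlusSymbol g)
    (hfg : f * g = 1) (n : ℕ) :
    (finiteSection (toeplitzAddHankelOp (reflect f * f)) n).det
      = (fourierCoeff f 0 ^ 2) ^ n * (finiteSection (oneAddHankelInv f g) n).det := by
  have h_lower := hf.isLowerTriangular_toeplitzOp
  have h_upper := hf.isUpperTriangular_toeplitzOp_reflect
  rw [← toeplitzOp_mul_oneAddHankelInv_mul_toeplitzOp_reflect hg hfg,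
    finiteSection_mul_of_isUpperTriangular h_upper, finiteSection_mul_of_isLowerTriangular h_lower,
    Matrix.det_mul, Matrix.det_mul, det_finiteSection_of_isLowerTriangular h_lower,
    det_finiteSection_of_isUpperTriangular h_upper]
  simp only [ent_toeplitzOp, fourierCoeff_reflect, sub_self, neg_zero, Finset.prod_const,
    Finset.card_univ, Fintype.card_fin]
  ring

end WienerHopf

section DiskAlgebra

instance fact_two_pi_pos : Fact (0 < 2 * π) := ⟨Real.two_pi_pos⟩

lemma coe_toCircle_two_pi (θ : ℝ) :
    (toCircle (θ : AddCircle (2 * π)) : ℂ) = Complex.exp (Complex.I * θ) := by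
  rw [toCircle_apply_mk, Circle.coe_exp, div_self Real.two_pi_pos.ne', one_mul, mul_comm]

lemma fc_eq_fourierCoeff {f : ℝ → ℂ} {F : AddCircle (2 * π) → ℂ} (h : ∀ θ : ℝ, f θ = F θ)
    (n : ℤ) : fc f n = fourierCoeff F n := by
  rw [fourierCoeff_eq_intervalIntegral F n 0, fc, zero_add, Complex.real_smul]
  congr 1
  refine intervalIntegral.integral_congr fun θ _ => ?_
  simp only [smul_eq_mul, h]
  rw [mul_comm, fourier_apply, toCircle_zsmul, Circle.coe_zpow, coe_toCircle_two_pi,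
    ← Complex.exp_int_mul]
  congr 2
  push_cast
  ring

variable {h : ℂ → ℂ}

/-- The boundary values on the unit circle, as a function of the angle, of a function in the disk
algebra. -/
def boundaryValue (hh : DiffContOnCl ℂ h (ball 0 1)) : C(AddCircle (2 * π), ℂ) where
  toFun x := h (toCircle x)
  continuous_toFun := hh.continuousOn_ball.comp_continuous
    (continuous_subtype_val.comp continuous_toCircle) fun _ =>
      mem_closedBall_zero_iff.mpr (Circle.norm_coe _).le

lemma boundaryValue_coe (hh : DiffContOnCl ℂ h (ball 0 1)) (θ : ℝ) :
    boundaryValue hh θ = h (Complex.exp (Complex.I * θ)) :=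
  congrArg h (coe_toCircle_two_pi θ)

lemma reflect_boundaryValue_coe (hh : DiffContOnCl ℂ h (ball 0 1)) (θ : ℝ) :
    reflect (boundaryValue hh) θ = h (Complex.exp (-(Complex.I * θ))) := by
  rw [reflect_apply, ← coe_neg, boundaryValue_coe, Complex.ofReal_neg, mul_neg]

lemma fourierCoeff_boundaryValue_neg (hh : DiffContOnCl ℂ h (ball 0 1)) (m : ℕ) :
    fourierCoeff (boundaryValue hh) (-m) = 0 ^ m * h 0 := by
  have h_pow : DiffContOnCl ℂ (fun z : ℂ => z ^ m * h z) (ball 0 |1|) := by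
    rw [abs_one]
    exact (differentiable_id.pow m).diffContOnCl.smul hh
  rw [← h_pow.circleAverage, Real.circleAverage, fourierCoeff_eq_intervalIntegral _ _ 0, zero_add,
    one_div]
  congr 1
  refine intervalIntegral.integral_congr fun θ _ => ?_
  have h_circle : circleMap 0 1 θ = toCircle (θ : AddCircle (2 * π)) := by
    rw [coe_toCircle_two_pi, circleMap, zero_add, Complex.ofReal_one, one_mul, mul_comm]
  simp only [h_circle, neg_neg, fourier_apply, toCircle_zsmul, zpow_natCast, Circle.coe_pow,
    smul_eq_mul]
  rfl

lemma isPlusSymbol_boundaryValue (hh : DiffContOnCl ℂ h (ball 0 1)) :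
    IsPlusSymbol (boundaryValue hh) := fun n hn => by
  obtain ⟨m, rfl⟩ := Int.exists_eq_neg_ofNat hn.le
  rw [fourierCoeff_boundaryValue_neg, zero_pow (by omega), zero_mul]

lemma fourierCoeff_boundaryValue_zero (hh : DiffContOnCl ℂ h (ball 0 1)) :
    fourierCoeff (boundaryValue hh) 0 = h 0 := by
  simpa using fourierCoeff_boundaryValue_neg hh 0

lemma diffContOnCl_tsum_mul_pow {γ : ℕ → ℂ} (hγ : Summable fun k => ‖γ k‖) :
    DiffContOnCl ℂ (fun z => ∑' k, γ k * z ^ k) (ball 0 1) := by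
  have h_bound : ∀ k, ∀ z ∈ closedBall (0 : ℂ) 1, ‖γ k * z ^ k‖ ≤ ‖γ k‖ := fun k z hz => by
    rw [norm_mul, norm_pow]
    exact mul_le_of_le_one_right (norm_nonneg _)
      (pow_le_one₀ (norm_nonneg _) (mem_closedBall_zero_iff.mp hz))
  exact .mk_ball
    (Complex.differentiableOn_tsum_of_summable_norm hγ (fun k => by fun_prop) isOpen_ball
      fun k z hz => h_bound k z (ball_subset_closedBall hz))
    (continuousOn_tsum (fun k => by fun_prop) hγ h_bound)

end DiskAlgebra

theorem stmt5_general {aplus : ℂ → ℂ} (haplus : DiffContOnCl ℂ aplus (ball 0 1))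
    (hnz : ∀ z : ℂ, ‖z‖ ≤ 1 → aplus z ≠ 0) (G : ℂ) {a : ℝ → ℂ}
    (hfact : ∀ θ : ℝ, a θ =
      aplus (Complex.exp (-(Complex.I * θ))) * G * aplus (Complex.exp (Complex.I * θ)))
    {ψ : ℝ → ℂ}
    (hψ : ∀ θ : ℝ, ψ θ =
      aplus (Complex.exp (-(Complex.I * θ))) / aplus (Complex.exp (Complex.I * θ)))
    {A : l2 →L[ℂ] l2}
    (hA : ∀ j k : ℕ, ent A j k = (if j = k then 1 else 0) + fc ψ ((j : ℤ) + k + 1)) :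
    ∃ A' : l2 →L[ℂ] l2, A ∘L A' = 1 ∧ A' ∘L A = 1 ∧
      ∀ n : ℕ,
        (Matrix.of fun j k : Fin n => fc a ((j : ℤ) - k) + fc a ((j : ℤ) + k + 1)).det
          = (G * aplus 0 ^ 2) ^ n * (Matrix.of fun j k : Fin n => ent A' j k).det := by
  have hinv : DiffContOnCl ℂ aplus⁻¹ (ball 0 1) := haplus.inv fun z hz =>
    hnz z (mem_closedBall_zero_iff.mp (closure_ball_subset_closedBall hz))
  set f := boundaryValue haplus
  set g := boundaryValue hinv
  have hf : IsPlusSymbol f := isPlusSymbol_boundaryValue haplus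
  have hg : IsPlusSymbol g := isPlusSymbol_boundaryValue hinv
  have hfg : f * g = 1 := ContinuousMap.ext fun x => mul_inv_cancel₀ (hnz _ (Circle.norm_coe _).le)
  have hA_eq : A = 1 + hankelOp (reflect f * g) := eq_of_ent_eq fun j k => by
    rw [hA, ent_add, ent_one, ent_hankelOp, fc_eq_fourierCoeff fun θ => ?_]
    rw [hψ, ContinuousMap.mul_apply, reflect_boundaryValue_coe, boundaryValue_coe, div_eq_mul_inv,
      Pi.inv_apply]
  have ha_coeff (k : ℤ) : fc a k = G * fourierCoeff (reflect f * f) k := by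
    rw [← fourierCoeff.const_mul, fc_eq_fourierCoeff fun θ => ?_]
    rw [hfact, ContinuousMap.mul_apply, reflect_boundaryValue_coe, boundaryValue_coe]
    ring
  refine ⟨oneAddHankelInv f g, hA_eq ▸ one_add_hankelOp_mul_oneAddHankelInv hf hg hfg,
    hA_eq ▸ oneAddHankelInv_mul_one_add_hankelOp hf hg hfg, fun n => ?_⟩
  have h_matrix : (Matrix.of fun j k : Fin n => fc a ((j : ℤ) - k) + fc a ((j : ℤ) + k + 1))
      = G • finiteSection (toeplitzAddHankelOp (reflect f * f)) n := by
    ext j k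
    rw [Matrix.of_apply, ha_coeff, ha_coeff, ← mul_add, ← ent_toeplitzAddHankelOp]
    rfl
  rw [h_matrix, Matrix.det_smul, Fintype.card_fin, det_finiteSection_toeplitzAddHankelOp hf hg hfg,
    fourierCoeff_boundaryValue_zero, mul_pow, mul_assoc]
  rfl

/-- Let `a` be nonvanishing and even on the circle with absolutely summable Fourier
coefficients and Wiener–Hopf factorization `a(e^{iθ}) = a₊(e^{−iθ}) G a₊(e^{iθ})`, and set
`ψ(e^{iθ}) = a₊(e^{−iθ})/a₊(e^{iθ})`.  Then any bounded operator `I + H(ψ)` on ℓ²(ℕ) is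
invertible, and for every `n ≥ 1`:
`det((a_{j−k} + a_{j+k+1})_{j,k<n}) = Gⁿ · det[Pₙ (I + H(ψ))⁻¹ Pₙ]`. -/
theorem stmt5 (c : ℤ → ℂ) (hc : Summable fun k => ‖c k‖)
    (a : ℝ → ℂ)
    (ha : ∀ θ : ℝ, a θ = ∑' k : ℤ, c k * Complex.exp (Complex.I * k * θ))
    (heven : ∀ k : ℤ, c k = c (-k))
    (hnz : ∀ θ : ℝ, a θ ≠ 0)
    (γ : ℕ → ℂ) (hγ : Summable fun k => ‖γ k‖)
    (aplus : ℂ → ℂ) (haplus : ∀ z : ℂ, aplus z = ∑' k : ℕ, γ k * z ^ k)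
    (h0 : aplus 0 = 1)
    (hnz' : ∀ z : ℂ, ‖z‖ ≤ 1 → aplus z ≠ 0)
    (G : ℂ)
    (hfact : ∀ θ : ℝ, a θ =
      aplus (Complex.exp (-(Complex.I * θ))) * G * aplus (Complex.exp (Complex.I * θ)))
    (ψ : ℝ → ℂ)
    (hψ : ∀ θ : ℝ, ψ θ =
      aplus (Complex.exp (-(Complex.I * θ))) / aplus (Complex.exp (Complex.I * θ)))
    (A : l2 →L[ℂ] l2)
    (hA : ∀ j k : ℕ, ent A j k =
      (if j = k then 1 else 0) + fc ψ ((j : ℤ) + k + 1)) :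
    ∃ A' : l2 →L[ℂ] l2, A ∘L A' = 1 ∧ A' ∘L A = 1 ∧
      ∀ n : ℕ, 1 ≤ n →
        (Matrix.of fun j k : Fin n =>
            fc a ((j : ℤ) - k) + fc a ((j : ℤ) + k + 1)).det
          = G ^ n * (Matrix.of fun j k : Fin n => ent A' j k).det := by
  obtain ⟨A', hAA', hA'A, h_det⟩ :=
    stmt5_general (funext haplus ▸ diffContOnCl_tsum_mul_pow hγ) hnz' G hfact hψ hA
  exact ⟨A', hAA', hA'A, fun n _ => by simpa only [h0, one_pow, mul_one] using h_det n⟩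

end
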